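/- Let b > 0 and let q : ℝ → ℂ be continuous on [−b, b]. Then there exists a continuous function K on the closed triangle {(x,t) ∈ ℝ² : |t| ≤ |x| ≤ b} such that for every twice continuously differentiable function u : [−b,b] → ℂ, the function (Tu)(x) := u(x) + ∫_{−x}^{x} K(x,t) u(t) dt is twice continuously differentiable on [−b,b] and satisfies (Tu)''(x) − q(x)·(Tu)(x) = (T(u''))(x) for all x ∈ [−b,b]. -/

import Mathlib

open MeasureTheory Set Filter Finset Complex Topology

noncomputable section

/-- Differentiation under the integral sign, fixed endpoints. -/
lemma tm_leib_fixed (g g' : ℝ → ℝ → ℂ)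
    (hg : Continuous (Function.uncurry g)) (hg' : Continuous (Function.uncurry g'))
    (hd : ∀ x t, HasDerivAt (fun s => g s t) (g' x t) x) (a x : ℝ) :
    HasDerivAt (fun s => ∫ t in (0:ℝ)..a, g s t) (∫ t in (0:ℝ)..a, g' x t) x := by
  have hc : IsCompact (Metric.closedBall x 1 ×ˢ uIcc 0 a) :=
    (isCompact_closedBall x 1).prod isCompact_uIcc
  obtain ⟨C, hC⟩ := hc.exists_bound_of_continuousOn hg'.continuousOn
  refine (intervalIntegral.hasDerivAt_integral_of_dominated_loc_of_deriv_le
    (F := g) (F' := g') (bound := fun _ => C)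
    (Metric.closedBall_mem_nhds x one_pos) ?_ ?_ ?_ ?_ ?_ ?_).2
  · refine Eventually.of_forall fun s => ?_
    exact (hg.comp (Continuous.prodMk_right s)).aestronglyMeasurable
  · exact (hg.comp (Continuous.prodMk_right x)).intervalIntegrable _ _
  · exact (hg'.comp (Continuous.prodMk_right x)).aestronglyMeasurable
  · refine Eventually.of_forall fun t ht s hs => ?_
    exact hC (s, t) ⟨hs, uIoc_subset_uIcc ht⟩
  · exact intervalIntegrable_const
  · exact Eventually.of_forall fun t _ s _ => hd s t

/-- Leibniz rule with moving upper endpoint. -/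
lemma tm_leib (g g' : ℝ → ℝ → ℂ)
    (hg : Continuous (Function.uncurry g)) (hg' : Continuous (Function.uncurry g'))
    (hd : ∀ x t, HasDerivAt (fun s => g s t) (g' x t) x) (x : ℝ) :
    HasDerivAt (fun s => ∫ t in (0:ℝ)..s, g s t) (g x x + ∫ t in (0:ℝ)..x, g' x t) x := by
  have key := hasStrictFDerivAt_uncurry_coprod (𝕜 := ℝ) (u := (x, x))
    (f := fun s a => ∫ t in (0:ℝ)..a, g s t)
    (f₁ := fun s a => ContinuousLinearMap.toSpanSingleton ℝ (∫ t in (0:ℝ)..a, g' s t))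
    (f₂ := fun s a => ContinuousLinearMap.toSpanSingleton ℝ (g s a))
    (Eventually.of_forall fun v =>
      (tm_leib_fixed g g' hg hg' hd v.2 v.1).hasFDerivAt)
    (Eventually.of_forall fun v => by
      have hcont : Continuous (g v.1) := hg.comp (Continuous.prodMk_right v.1)
      exact (hcont.integral_hasStrictDerivAt 0 v.2).hasDerivAt.hasFDerivAt)
    (by
      refine Continuous.continuousAt ?_
      have : Continuous fun p : ℝ × ℝ => ∫ t in (0:ℝ)..p.2, g' p.1 t := by
        have h2 : Continuous (Function.uncurry fun (p : ℝ × ℝ) (t : ℝ) => g' p.1 t) :=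
          hg'.comp (by fun_prop : Continuous fun z : (ℝ × ℝ) × ℝ => (z.1.1, z.2))
        exact intervalIntegral.continuous_parametric_intervalIntegral_of_continuous h2 continuous_snd
      exact (ContinuousLinearMap.toSpanSingletonCLE (𝕜 := ℝ) (E := ℂ)).continuous.comp this)
    (by
      refine Continuous.continuousAt ?_
      exact (ContinuousLinearMap.toSpanSingletonCLE (𝕜 := ℝ) (E := ℂ)).continuous.comp hg)
  have h2 : HasDerivAt (fun s : ℝ => (s, s)) ((1:ℝ), (1:ℝ)) x :=
    (hasDerivAt_id x).prodMk (hasDerivAt_id x)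
  have h3 := HasFDerivAt.comp_hasDerivAt (f := fun s : ℝ => (s, s)) x key.hasFDerivAt h2
  refine HasDerivAt.congr_deriv (f := fun s => ∫ t in (0:ℝ)..s, g s t) h3 ?_
  simp [Function.HasUncurry.uncurry, add_comm]

/-- Volterra operator. -/
def tmV (q : ℝ → ℂ) (H : ℝ × ℝ → ℂ) (p : ℝ × ℝ) : ℂ :=
  ∫ α in (0:ℝ)..p.1, ∫ β in (0:ℝ)..p.2, q (α + β) * H (α, β)

lemma tmV_continuous (q : ℝ → ℂ) (hq : Continuous q) (H : ℝ × ℝ → ℂ) (hH : Continuous H) :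
    Continuous (tmV q H) := by
  unfold tmV
  have h1 : Continuous (Function.uncurry fun (z : (ℝ × ℝ) × ℝ) (β : ℝ) =>
      q (z.2 + β) * H (z.2, β)) := by
    unfold Function.uncurry
    fun_prop
  have h2 : Continuous fun z : (ℝ × ℝ) × ℝ => ∫ β in (0:ℝ)..z.1.2, q (z.2 + β) * H (z.2, β) :=
    intervalIntegral.continuous_parametric_intervalIntegral_of_continuous h1 (by fun_prop)
  exact intervalIntegral.continuous_parametric_intervalIntegral_of_continuous
    (f := fun (p : ℝ × ℝ) α => ∫ β in (0:ℝ)..p.2, q (α + β) * H (α, β)) h2 continuous_fst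

lemma tm_cosh_bound (f : ℝ → ℂ) (l B : ℝ) (hl : 0 < l) (hB : 0 ≤ B)
    (h : ∀ t, ‖f t‖ ≤ B * Real.cosh (l * t)) (x : ℝ) :
    ‖∫ t in (0:ℝ)..x, f t‖ ≤ B / l * Real.cosh (l * x) := by
  have h1 : ‖∫ t in (0:ℝ)..x, f t‖ ≤ |∫ t in (0:ℝ)..x, B * Real.cosh (l * t)| :=
    intervalIntegral.norm_integral_le_abs_of_norm_le (Eventually.of_forall h)
      (Continuous.intervalIntegrable (by fun_prop) _ _)
  have h2 : ∫ t in (0:ℝ)..x, B * Real.cosh (l * t) = B / l * Real.sinh (l * x) := by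
    rw [intervalIntegral.integral_eq_sub_of_hasDerivAt
      (f := fun t => B / l * Real.sinh (l * t))]
    · simp
    · intro t _
      have := (((hasDerivAt_id t).const_mul l).sinh).const_mul (B / l)
      refine HasDerivAt.congr_deriv (f := fun t => B / l * Real.sinh (l * t)) this ?_
      simp only [id]
      field_simp
    · exact Continuous.intervalIntegrable (by fun_prop) _ _
  rw [h2, abs_mul, abs_of_nonneg (div_nonneg hB hl.le)] at h1
  refine h1.trans (mul_le_mul_of_nonneg_left ?_ (div_nonneg hB hl.le))
  rw [abs_le]
  constructor
  · have := Real.exp_pos (l * x)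
    rw [Real.cosh_eq, Real.sinh_eq]; linarith
  · exact (Real.sinh_lt_cosh _).le

lemma tmV_bound (q : ℝ → ℂ) (M : ℝ) (hM : 0 ≤ M) (hqM : ∀ x, ‖q x‖ ≤ M) (l : ℝ) (hl : 0 < l)
    (H : ℝ × ℝ → ℂ) (B : ℝ) (hB : 0 ≤ B)
    (hH : ∀ p, ‖H p‖ ≤ B * (Real.cosh (l * p.1) * Real.cosh (l * p.2))) (p : ℝ × ℝ) :
    ‖tmV q H p‖ ≤ M * B / l / l * (Real.cosh (l * p.1) * Real.cosh (l * p.2)) := by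
  unfold tmV
  have c1 := fun x : ℝ => (Real.cosh_pos x).le
  have := tm_cosh_bound (fun α => ∫ β in (0:ℝ)..p.2, q (α + β) * H (α, β)) l
    (M * B / l * Real.cosh (l * p.2)) hl (by have := c1 (l * p.2); positivity) (fun α => by
      have := tm_cosh_bound (fun β => q (α + β) * H (α, β)) l (M * B * Real.cosh (l * α)) hl
        (by have := c1 (l * α); positivity) (fun β => by
          rw [norm_mul]
          calc _ ≤ M * (B * (Real.cosh (l * α) * Real.cosh (l * β))) :=
                mul_le_mul (hqM _) (hH (α, β)) (norm_nonneg _) hM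
            _ = _ := by ring) p.2
      refine this.trans (le_of_eq ?_)
      ring) p.1
  refine this.trans (le_of_eq ?_)
  ring

open BoundedContinuousFunction in
/-- Existence of a solution of the Goursat integral equation. -/
lemma tm_exists_H (q : ℝ → ℂ) (hq : Continuous q) (M : ℝ) (hM : 0 ≤ M) (hqM : ∀ x, ‖q x‖ ≤ M) :
    ∃ H : ℝ × ℝ → ℂ, Continuous H ∧
      ∀ p, H p = (1/2) * (∫ s in (0:ℝ)..p.1, q s) + tmV q H p := by
  obtain ⟨l, hl, hlM⟩ : ∃ l : ℝ, 0 < l ∧ M / l / l ≤ 1/2 := by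
    refine ⟨2 * M + 1, by positivity, ?_⟩
    rw [div_div, div_le_iff₀ (by positivity)]
    nlinarith
  let w : ℝ × ℝ → ℝ := fun p => Real.cosh (l * p.1) * Real.cosh (l * p.2)
  have hw0 : ∀ p, 0 < w p := fun p => mul_pos (Real.cosh_pos _) (Real.cosh_pos _)
  have hwc : Continuous w := by fun_prop
  have hwC : Continuous fun p => (w p : ℂ) := by fun_prop
  have hwne : ∀ p, (w p : ℂ) ≠ 0 := fun p => by exact_mod_cast (hw0 p).ne'
  have hwn : ∀ p, ‖(w p : ℂ)‖ = w p := fun p => by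
    rw [Complex.norm_real, Real.norm_of_nonneg (hw0 p).le]
  let Q : ℝ × ℝ → ℂ := fun p => (1/2) * ∫ s in (0:ℝ)..p.1, q s
  have hQc : Continuous Q := by
    have : Continuous fun x : ℝ => ∫ s in (0:ℝ)..x, q s :=
      intervalIntegral.continuous_primitive (fun a b => hq.intervalIntegrable a b) 0
    fun_prop
  have hQb : ∀ p, ‖Q p‖ ≤ M / l * w p := fun p => by
    have h1 := tm_cosh_bound q l M hl hM (fun t => (hqM t).trans
      (le_mul_of_one_le_right hM (Real.one_le_cosh _))) p.1
    have h2 : Real.cosh (l * p.1) ≤ w p :=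
      le_mul_of_one_le_right (Real.cosh_pos _).le (Real.one_le_cosh _)
    have h3 : M / l * Real.cosh (l * p.1) ≤ M / l * w p :=
      mul_le_mul_of_nonneg_left h2 (by positivity)
    simp only [Q, norm_mul]
    have : ‖(1/2 : ℂ)‖ = 1/2 := by norm_num
    rw [this]
    have := norm_nonneg (∫ s in (0:ℝ)..p.1, q s)
    linarith
  have hvb : ∀ h : (ℝ × ℝ) →ᵇ ℂ, ∀ p, ‖tmV q (fun p => w p * h p) p‖ ≤ ‖h‖ / 2 * w p := by
    intro h p
    have := tmV_bound q M hM hqM l hl (fun p => w p * h p) ‖h‖ (norm_nonneg _) (fun p => by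
      rw [norm_mul, hwn, mul_comm]
      exact mul_le_mul_of_nonneg_right (h.norm_coe_le_norm p) (hw0 p).le) p
    refine this.trans (mul_le_mul_of_nonneg_right ?_ (hw0 p).le)
    calc M * ‖h‖ / l / l = M / l / l * ‖h‖ := by ring
      _ ≤ 1/2 * ‖h‖ := mul_le_mul_of_nonneg_right hlM (norm_nonneg _)
      _ = _ := by ring
  have hcont : ∀ h : (ℝ × ℝ) →ᵇ ℂ, Continuous fun p => (w p : ℂ) * h p :=
    fun h => hwC.mul h.continuous
  let Φ : ((ℝ × ℝ) →ᵇ ℂ) → ((ℝ × ℝ) →ᵇ ℂ) := fun h =>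
    BoundedContinuousFunction.ofNormedAddCommGroup
      (fun p => (Q p + tmV q (fun p => w p * h p) p) / w p)
      ((hQc.add (tmV_continuous q hq _ (hcont h))).div hwC hwne)
      (M / l + ‖h‖ / 2) (fun p => by
        rw [norm_div, hwn, div_le_iff₀ (hw0 p), add_mul]
        exact (norm_add_le _ _).trans (add_le_add (hQb p) (hvb h p)))
  have hΦ : ContractingWith (1/2) Φ := by
    refine ⟨by rw [← NNReal.coe_lt_coe]; norm_num, LipschitzWith.of_dist_le_mul fun h k => ?_⟩
    rw [BoundedContinuousFunction.dist_le (by positivity)]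
    intro p
    rw [dist_eq_norm, dist_eq_norm]
    have e : Φ h p - Φ k p = tmV q (fun p => w p * (h - k) p) p / w p := by
      change (Q p + tmV q (fun p => w p * h p) p) / w p
        - (Q p + tmV q (fun p => w p * k p) p) / w p = _
      rw [← sub_div]
      congr 1
      have hin : ∀ (f : (ℝ × ℝ) →ᵇ ℂ) (α : ℝ), Continuous fun β : ℝ =>
          q (α + β) * (w (α, β) * f (α, β)) := by
        intro f α
        have := hcont f
        fun_prop
      have hout : ∀ (f : (ℝ × ℝ) →ᵇ ℂ), Continuous fun α : ℝ =>
          ∫ β in (0:ℝ)..p.2, q (α + β) * (w (α, β) * f (α, β)) := by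
        intro f
        refine intervalIntegral.continuous_parametric_intervalIntegral_of_continuous' ?_ _ _
        unfold Function.uncurry
        have := hcont f
        fun_prop
      simp only [tmV]
      rw [add_sub_add_left_eq_sub, ← intervalIntegral.integral_sub
        ((hout h).intervalIntegrable _ _) ((hout k).intervalIntegrable _ _)]
      refine intervalIntegral.integral_congr fun α _ => ?_
      rw [← intervalIntegral.integral_sub
        ((hin h α).intervalIntegrable _ _) ((hin k α).intervalIntegrable _ _)]
      refine intervalIntegral.integral_congr fun β _ => ?_
      simp only [BoundedContinuousFunction.coe_sub, Pi.sub_apply]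
      ring
    rw [e, norm_div, hwn, div_le_iff₀ (hw0 p)]
    refine (hvb (h - k) p).trans (le_of_eq ?_)
    push_cast
    ring
  let h := ContractingWith.fixedPoint Φ hΦ
  have hfix : Φ h = h := hΦ.fixedPoint_isFixedPt
  refine ⟨fun p => w p * h p, hcont h, fun p => ?_⟩
  have : h p = (Q p + tmV q (fun p => w p * h p) p) / w p := by
    conv_lhs => rw [← hfix]
    rfl
  simp only
  rw [mul_comm]
  nth_rewrite 1 [this]
  rw [div_mul_cancel₀ _ (hwne p)]

lemma tm_cov (f : ℝ → ℂ) (x : ℝ) :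
    ∫ t in (-x)..x, f t = 2 * ∫ s in (0:ℝ)..x, f (2 * s - x) := by
  rw [intervalIntegral.integral_comp_mul_sub (f := f) (two_ne_zero) x]
  rw [show 2 * (0:ℝ) - x = -x by ring, show 2 * x - x = x by ring]
  simp

lemma tm_refl (f : ℝ → ℂ) (x : ℝ) :
    ∫ s in (0:ℝ)..x, f s = ∫ s in (0:ℝ)..x, f (x - s) := by
  rw [intervalIntegral.integral_comp_sub_left (f := f) x]
  simp

lemma tm_global (q : ℝ → ℂ) (hq : Continuous q) (H : ℝ × ℝ → ℂ) (hH : Continuous H)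
    (hHeq : ∀ p, H p = (1/2) * (∫ s in (0:ℝ)..p.1, q s) + tmV q H p)
    (u u' u'' : ℝ → ℂ) (hu : ∀ x, HasDerivAt u (u' x) x) (hu' : ∀ x, HasDerivAt u' (u'' x) x)
    (hu'' : Continuous u'') :
    ∃ F1 : ℝ → ℂ, (∀ x, HasDerivAt
        (fun s : ℝ => ∫ t in (-s)..s, H ((s + t) / 2, (s - t) / 2) * u t) (F1 x) x) ∧
      (∀ x, HasDerivAt F1 (q x * u x
        + q x * (∫ t in (-x)..x, H ((x + t) / 2, (x - t) / 2) * u t)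
        + ∫ t in (-x)..x, H ((x + t) / 2, (x - t) / 2) * u'' t) x) := by
  have cu : Continuous u := continuous_iff_continuousAt.2 fun x => (hu x).continuousAt
  have cu' : Continuous u' := continuous_iff_continuousAt.2 fun x => (hu' x).continuousAt
  let N : ℝ × ℝ → ℂ := fun p => ∫ α in (0:ℝ)..p.1, q (α + p.2) * H (α, p.2)
  have cN : Continuous N := by
    refine intervalIntegral.continuous_parametric_intervalIntegral_of_continuous
      (f := fun (p : ℝ × ℝ) α => q (α + p.2) * H (α, p.2)) ?_ continuous_fst
    unfold Function.uncurry
    fun_prop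
  have hN1 : ∀ ξ η, HasDerivAt (fun s => N (s, η)) (q (ξ + η) * H (ξ, η)) ξ := by
    intro ξ η
    have hc : Continuous fun α : ℝ => q (α + η) * H (α, η) := by fun_prop
    exact (hc.integral_hasStrictDerivAt 0 ξ).hasDerivAt
  have hH2 : ∀ ξ η, HasDerivAt (fun s => H (ξ, s)) (N (ξ, η)) η := by
    intro ξ η
    have h1 := tm_leib_fixed (fun η α => ∫ β in (0:ℝ)..η, q (α + β) * H (α, β))
      (fun η α => q (α + η) * H (α, η)) (by
        refine intervalIntegral.continuous_parametric_intervalIntegral_of_continuous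
          (f := fun (p : ℝ × ℝ) β => q (p.2 + β) * H (p.2, β)) ?_ continuous_fst
        unfold Function.uncurry
        fun_prop) (by unfold Function.uncurry; fun_prop) (by
        intro η α
        have hc : Continuous fun β : ℝ => q (α + β) * H (α, β) := by fun_prop
        exact (hc.integral_hasStrictDerivAt 0 η).hasDerivAt) ξ η
    have e : (fun s => H (ξ, s)) = fun s => (1/2) * (∫ s in (0:ℝ)..ξ, q s) +
        ∫ α in (0:ℝ)..ξ, ∫ β in (0:ℝ)..s, q (α + β) * H (α, β) := by
      funext s
      exact hHeq (ξ, s)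
    rw [e]
    exact h1.const_add _
  have hP : ∀ x, HasDerivAt (fun s => H (s, 0)) (q x / 2) x := by
    intro x
    have e : (fun s => H (s, 0)) = fun s => (1/2) * (∫ t in (0:ℝ)..s, q t) := by
      funext s
      rw [hHeq (s, 0)]
      simp [tmV]
    rw [e]
    refine ((hq.integral_hasStrictDerivAt 0 x).hasDerivAt.const_mul (1/2 : ℂ)).congr_deriv ?_
    ring
  have hcov : ∀ (v : ℝ → ℂ) (x : ℝ), ∫ t in (-x)..x, H ((x + t) / 2, (x - t) / 2) * v t
      = 2 * ∫ s in (0:ℝ)..x, H (s, x - s) * v (2 * s - x) := by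
    intro v x
    rw [tm_cov]
    congr 1
    refine intervalIntegral.integral_congr fun s _ => ?_
    rw [show (x + (2 * s - x)) / 2 = s by ring, show (x - (2 * s - x)) / 2 = x - s by ring]
  have hA : ∀ (v v' : ℝ → ℂ), (∀ x, HasDerivAt v (v' x) x) → Continuous v' → ∀ x,
      HasDerivAt (fun x => ∫ s in (0:ℝ)..x, H (s, x - s) * v (2 * s - x))
        (H (x, 0) * v x + ∫ s in (0:ℝ)..x,
          (N (s, x - s) * v (2 * s - x) - H (s, x - s) * v' (2 * s - x))) x := by
    intro v v' hv cv' x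
    have cv : Continuous v := continuous_iff_continuousAt.2 fun x => (hv x).continuousAt
    have := tm_leib (fun x s => H (s, x - s) * v (2 * s - x))
      (fun x s => N (s, x - s) * v (2 * s - x) - H (s, x - s) * v' (2 * s - x))
      (by unfold Function.uncurry; fun_prop) (by unfold Function.uncurry; fun_prop)
      (fun x s => by
        have h1 := (hH2 s (x - s)).comp_sub_const x s
        have h2 := (hv (2 * s - x)).comp_const_sub (2 * s) x
        refine (h1.mul h2).congr_deriv ?_
        ring) x
    refine this.congr_deriv ?_
    rw [sub_self, show 2 * x - x = x by ring]
  have hB : ∀ x, HasDerivAt (fun x => ∫ s in (0:ℝ)..x, N (x - s, s) * u (x - 2 * s))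
      (∫ s in (0:ℝ)..x, (q x * (H (x - s, s) * u (x - 2 * s))
        + N (x - s, s) * u' (x - 2 * s))) x := by
    intro x
    have := tm_leib (fun x s => N (x - s, s) * u (x - 2 * s))
      (fun x s => q x * (H (x - s, s) * u (x - 2 * s)) + N (x - s, s) * u' (x - 2 * s))
      (by unfold Function.uncurry; fun_prop) (by unfold Function.uncurry; fun_prop)
      (fun x s => by
        have h1 := (hN1 (x - s) s).comp_sub_const x s
        have h2 := (hu (x - 2 * s)).comp_sub_const x (2 * s)
        refine (h1.mul h2).congr_deriv ?_
        rw [sub_add_cancel]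
        ring) x
    refine this.congr_deriv ?_
    have : N (x - x, x) = 0 := by simp [N]
    rw [this]
    ring
  have hrefl : ∀ (G : ℝ × ℝ → ℂ) (v : ℝ → ℂ) (x : ℝ),
      ∫ s in (0:ℝ)..x, G (x - s, s) * v (x - 2 * s)
      = ∫ s in (0:ℝ)..x, G (s, x - s) * v (2 * s - x) := by
    intro G v x
    rw [tm_refl (fun s => G (s, x - s) * v (2 * s - x))]
    refine intervalIntegral.integral_congr fun s _ => ?_
    rw [show x - (x - s) = s by ring, show 2 * (x - s) - x = x - 2 * s by ring]
  have ii : ∀ (G : ℝ × ℝ → ℂ) (v : ℝ → ℂ) (x : ℝ), Continuous G → Continuous v →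
      IntervalIntegrable (fun s => G (s, x - s) * v (2 * s - x)) volume 0 x := by
    intro G v x hG hv
    exact Continuous.intervalIntegrable (by fun_prop) _ _
  have ii' : ∀ (G : ℝ × ℝ → ℂ) (v : ℝ → ℂ) (x : ℝ), Continuous G → Continuous v →
      IntervalIntegrable (fun s => G (x - s, s) * v (x - 2 * s)) volume 0 x := by
    intro G v x hG hv
    exact Continuous.intervalIntegrable (by fun_prop) _ _
  refine ⟨fun x => 2 * (H (x, 0) * u x + (∫ s in (0:ℝ)..x, N (x - s, s) * u (x - 2 * s))
      - ∫ s in (0:ℝ)..x, H (s, x - s) * u' (2 * s - x)), fun x => ?_, fun x => ?_⟩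
  · simp only [hcov]
    refine ((hA u u' hu cu' x).const_mul 2).congr_deriv ?_
    rw [intervalIntegral.integral_sub (ii N u x cN cu) (ii H u' x hH cu'), hrefl]
    ring
  · refine (((((hP x).mul (hu x)).add (hB x)).sub (hA u' u'' hu' hu'' x)).const_mul 2).congr_deriv ?_
    rw [intervalIntegral.integral_sub (ii N u' x cN cu') (ii H u'' x hH hu''),
      intervalIntegral.integral_add ((ii' H u x hH cu).const_mul _) (ii' N u' x cN cu'),
      intervalIntegral.integral_const_mul, hrefl, hrefl, hcov, hcov]
    ring

lemma tm_ind (f g : ℝ → ℂ) (hf : Continuous f) (hg : Continuous g) (r c s : ℝ)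
    (hr : 0 ≤ r) (hrs : r ≤ s) (hc : 0 ≤ c) (hcs : c ≤ s) :
    ∫ t in (-s)..s, (indicator (Set.Ioc (-c) c) f t - indicator (Set.Ioc (-r) r) g t)
      = (∫ t in (-c)..c, f t) - ∫ t in (-r)..r, g t := by
  have key : ∀ (f : ℝ → ℂ) (r : ℝ), 0 ≤ r → r ≤ s →
      ∫ t in (-s)..s, indicator (Set.Ioc (-r) r) f t = ∫ t in (-r)..r, f t := by
    intro f r hr hrs
    rw [intervalIntegral.integral_of_le (by linarith), intervalIntegral.integral_of_le (by linarith),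
      setIntegral_indicator measurableSet_Ioc,
      Set.inter_eq_self_of_subset_right (Set.Ioc_subset_Ioc (by linarith) hrs)]
  have kint : ∀ (f : ℝ → ℂ) (r : ℝ), Continuous f →
      IntervalIntegrable (indicator (Set.Ioc (-r) r) f) volume (-s) s := by
    intro f r hf
    rw [intervalIntegrable_iff]
    exact (intervalIntegrable_iff.1 (hf.intervalIntegrable (-s) s)).indicator measurableSet_Ioc
  rw [intervalIntegral.integral_sub (kint f c hf) (kint g r hg), key f c hc hcs, key g r hr hrs]

lemma tm_extend (b : ℝ) (hb : 0 < b) (u u' u'' : ℝ → ℂ)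
    (hu : ∀ x ∈ Set.Icc (-b) b, HasDerivAt u (u' x) x)
    (hu' : ∀ x ∈ Set.Icc (-b) b, HasDerivAt u' (u'' x) x)
    (hu'' : ContinuousOn u'' (Set.Icc (-b) b)) :
    ∃ v v' v'' : ℝ → ℂ, (∀ x, HasDerivAt v (v' x) x) ∧ (∀ x, HasDerivAt v' (v'' x) x) ∧
      Continuous v'' ∧ (∀ x ∈ Set.Icc (-b) b, v x = u x ∧ v' x = u' x ∧ v'' x = u'' x) := by
  let c : ℝ → ℝ := fun x => max (-b) (min b x)
  have hc : Continuous c := by fun_prop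
  have hcm : ∀ x, c x ∈ Set.Icc (-b) b := fun x =>
    ⟨le_max_left _ _, max_le (by linarith) (min_le_left _ _)⟩
  have hci : ∀ x ∈ Set.Icc (-b) b, c x = x := fun x hx => by
    simp only [c]
    rw [min_eq_right hx.2, max_eq_right hx.1]
  let v'' : ℝ → ℂ := fun x => u'' (c x)
  have cv'' : Continuous v'' := hu''.comp_continuous hc hcm
  let v' : ℝ → ℂ := fun x => u' 0 + ∫ t in (0:ℝ)..x, v'' t
  have dv' : ∀ x, HasDerivAt v' (v'' x) x := fun x =>
    (cv''.integral_hasStrictDerivAt 0 x).hasDerivAt.const_add _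
  have cv' : Continuous v' := continuous_iff_continuousAt.2 fun x => (dv' x).continuousAt
  let v : ℝ → ℂ := fun x => u 0 + ∫ t in (0:ℝ)..x, v' t
  have dv : ∀ x, HasDerivAt v (v' x) x := fun x =>
    (cv'.integral_hasStrictDerivAt 0 x).hasDerivAt.const_add _
  have h0 : (0:ℝ) ∈ Set.Icc (-b) b := ⟨by linarith, hb.le⟩
  have e'' : ∀ x ∈ Set.Icc (-b) b, v'' x = u'' x := fun x hx => by simp only [v'', hci x hx]
  have e' : ∀ x ∈ Set.Icc (-b) b, v' x = u' x := fun x hx => by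
    simp only [v']
    rw [intervalIntegral.integral_eq_sub_of_hasDerivAt (f := u') (fun t ht => by
      have ht' := Set.uIcc_subset_Icc h0 hx ht
      rw [e'' t ht']; exact hu' t ht') (cv''.intervalIntegrable _ _)]
    ring
  refine ⟨v, v', v'', dv, dv', cv'', fun x hx => ⟨?_, e' x hx, e'' x hx⟩⟩
  simp only [v]
  rw [intervalIntegral.integral_eq_sub_of_hasDerivAt (f := u) (fun t ht => by
    have ht' := Set.uIcc_subset_Icc h0 hx ht
    rw [e' t ht']; exact hu t ht') (cv'.intervalIntegrable _ _)]
  ring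

/-- The kernel, extended by odd reflection beyond `|s| = b`. -/
def tmK (b : ℝ) (K0 : ℝ → ℝ → ℂ) (s t : ℝ) : ℂ :=
  if b < s then
    indicator (Set.Ioc (-b) b) (fun t => 2 * K0 b t) t
      - indicator (Set.Ioc (-(2 * b - s)) (2 * b - s)) (fun t => K0 (2 * b - s) t) t
  else if s < -b then
    indicator (Set.Ioc (-b) b) (fun t => 2 * K0 (-b) t) t
      - indicator (Set.Ioc (-(2 * b + s)) (2 * b + s)) (fun t => K0 (-(2 * b + s)) t) t
  else K0 s t

lemma tm_mul_ind (b : ℝ) (u v : ℝ → ℂ) (huv : ∀ x ∈ Set.Icc (-b) b, v x = u x) (f : ℝ → ℂ)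
    (r : ℝ) (hr : r ≤ b) (t : ℝ) :
    indicator (Set.Ioc (-r) r) f t * u t = indicator (Set.Ioc (-r) r) (fun t => f t * v t) t := by
  by_cases ht : t ∈ Set.Ioc (-r) r
  · rw [indicator_of_mem ht, indicator_of_mem ht,
      huv t ⟨by linarith [ht.1], ht.2.trans hr⟩]
  · rw [indicator_of_notMem ht, indicator_of_notMem ht, zero_mul]

lemma tmK_in (b : ℝ) (K0 : ℝ → ℝ → ℂ) (s : ℝ) (hs : s ∈ Set.Icc (-b) b) (t : ℝ) :
    tmK b K0 s t = K0 s t := by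
  unfold tmK
  rw [if_neg (not_lt.2 hs.2), if_neg (not_lt.2 hs.1)]

lemma tm_int_in (b : ℝ) (K0 : ℝ → ℝ → ℂ) (u v : ℝ → ℂ)
    (huv : ∀ x ∈ Set.Icc (-b) b, v x = u x) (s : ℝ) (hs : s ∈ Set.Icc (-b) b) :
    ∫ t in (-s)..s, tmK b K0 s t * u t = ∫ t in (-s)..s, K0 s t * v t := by
  refine intervalIntegral.integral_congr fun t ht => ?_
  have : t ∈ Set.Icc (-b) b := Set.uIcc_subset_Icc
    ⟨by linarith [hs.2], by linarith [hs.1]⟩ hs ht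
  simp only [tmK_in b K0 s hs, huv t this]

lemma tm_int_right (b : ℝ) (hb : 0 < b) (K0 : ℝ → ℝ → ℂ) (hK : ∀ s, Continuous (K0 s))
    (u v : ℝ → ℂ) (hv : Continuous v)
    (huv : ∀ x ∈ Set.Icc (-b) b, v x = u x) (s : ℝ) (hs : b < s) (hs2 : s ≤ 2 * b) :
    ∫ t in (-s)..s, tmK b K0 s t * u t = 2 * (∫ t in (-b)..b, K0 b t * v t)
      - ∫ t in (-(2 * b - s))..(2 * b - s), K0 (2 * b - s) t * v t := by
  unfold tmK
  simp only [if_pos hs, sub_mul]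
  simp only [tm_mul_ind b u v huv _ b le_rfl, tm_mul_ind b u v huv _ (2 * b - s) (by linarith)]
  have h1 := hK b
  have h2 := hK (2 * b - s)
  rw [tm_ind _ _ (by fun_prop) (by fun_prop) _ _ _ (by linarith) (by linarith) hb.le hs.le,
    ← intervalIntegral.integral_const_mul]
  simp only [mul_assoc]

lemma tm_int_left (b : ℝ) (hb : 0 < b) (K0 : ℝ → ℝ → ℂ) (hK : ∀ s, Continuous (K0 s))
    (u v : ℝ → ℂ) (hv : Continuous v)
    (huv : ∀ x ∈ Set.Icc (-b) b, v x = u x) (s : ℝ) (hs : s < -b) (hs2 : -(2 * b) ≤ s) :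
    ∫ t in (-s)..s, tmK b K0 s t * u t = 2 * (∫ t in b..(-b), K0 (-b) t * v t)
      - ∫ t in (2 * b + s)..(-(2 * b + s)), K0 (-(2 * b + s)) t * v t := by
  unfold tmK
  have hs' : ¬ b < s := by linarith
  simp only [if_neg hs', if_pos hs, sub_mul]
  simp only [tm_mul_ind b u v huv _ b le_rfl, tm_mul_ind b u v huv _ (2 * b + s) (by linarith)]
  have h1 := hK (-b)
  have h2 := hK (-(2 * b + s))
  have h3 := tm_ind (fun t => 2 * K0 (-b) t * v t) (fun t => K0 (-(2 * b + s)) t * v t)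
    (by fun_prop) (by fun_prop) (2 * b + s) b (-s) (by linarith) (by linarith) hb.le (by linarith)
  rw [neg_neg] at h3
  rw [intervalIntegral.integral_symm, h3, intervalIntegral.integral_symm (-b) b,
    intervalIntegral.integral_symm (-(2 * b + s)) (2 * b + s)]
  simp only [mul_assoc, intervalIntegral.integral_const_mul]
  ring

/-- Gluing by odd reflection keeps differentiability at the endpoints. -/
lemma tm_glue (b : ℝ) (hb : 0 < b) (F F0 F1 : ℝ → ℂ) (hF0 : ∀ x, HasDerivAt F0 (F1 x) x)
    (hin : ∀ s ∈ Set.Icc (-b) b, F s = F0 s)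
    (hR : ∀ s, b < s → s ≤ 2 * b → F s = 2 * F0 b - F0 (2 * b - s))
    (hL : ∀ s, s < -b → -(2 * b) ≤ s → F s = 2 * F0 (-b) - F0 (-(2 * b + s)))
    (x : ℝ) (hx : x ∈ Set.Icc (-b) b) : HasDerivAt F (F1 x) x := by
  have hw : HasDerivWithinAt F (F1 x) (Set.Icc (-b) b) x :=
    (hF0 x).hasDerivWithinAt.congr hin (hin x hx)
  rcases eq_or_lt_of_le hx.2 with h | h
  · subst h
    have h2 : HasDerivWithinAt F (F1 x) (Set.Icc x (2 * x)) x := by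
      have h3 : HasDerivAt (fun s => 2 * F0 x - F0 (2 * x - s)) (F1 x) x := by
        have h4 : HasDerivAt F0 (F1 x) (2 * x - x) := by
          rw [show 2 * x - x = x by ring]; exact hF0 x
        refine ((h4.comp_const_sub (2 * x) x).const_sub (2 * F0 x)).congr_deriv ?_
        ring
      have e : ∀ s ∈ Set.Icc x (2 * x), F s = 2 * F0 x - F0 (2 * x - s) := by
        intro s hs
        rcases eq_or_lt_of_le hs.1 with h | h
        · rw [← h, hin x hx, show 2 * x - x = x by ring]; ring
        · exact hR s h hs.2
      exact h3.hasDerivWithinAt.congr e (e x ⟨le_rfl, by linarith⟩)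
    refine (hw.union h2).hasDerivAt ?_
    rw [Set.Icc_union_Icc_eq_Icc (by linarith) (by linarith)]
    exact Icc_mem_nhds (by linarith) (by linarith)
  rcases eq_or_lt_of_le hx.1 with heq | hlt
  · have h2 : HasDerivWithinAt F (F1 x) (Set.Icc (-(2 * b)) (-b)) x := by
      have h3 : HasDerivAt (fun s => 2 * F0 (-b) - F0 (-(2 * b) - s)) (F1 x) x := by
        have h4 : HasDerivAt F0 (F1 x) (-(2 * b) - x) := by
          rw [show -(2 * b) - x = x by linarith]; exact hF0 x
        refine ((h4.comp_const_sub (-(2 * b)) x).const_sub (2 * F0 (-b))).congr_deriv ?_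
        ring
      have e : ∀ s ∈ Set.Icc (-(2 * b)) (-b), F s = 2 * F0 (-b) - F0 (-(2 * b) - s) := by
        intro s hs
        rcases eq_or_lt_of_le hs.2 with h | h
        · rw [h, hin (-b) ⟨le_rfl, by linarith⟩, show -(2 * b) - -b = -b by ring]; ring
        · rw [hL s h hs.1]; ring_nf
      exact h3.hasDerivWithinAt.congr e (e x ⟨by linarith, by linarith⟩)
    refine (h2.union hw).hasDerivAt ?_
    rw [Set.Icc_union_Icc_eq_Icc (by linarith) (by linarith)]
    exact Icc_mem_nhds (by linarith) (by linarith)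
  · exact hw.hasDerivAt (Icc_mem_nhds hlt h)

/-- existence of a transmutation operator with continuous kernel. -/
theorem transmutation_operator_exists
    (b : ℝ) (hb : 0 < b) (q : ℝ → ℂ) (hq : ContinuousOn q (Set.Icc (-b) b)) :
    ∃ K : ℝ → ℝ → ℂ,
      ContinuousOn (fun p : ℝ × ℝ => K p.1 p.2) {p : ℝ × ℝ | |p.2| ≤ |p.1| ∧ |p.1| ≤ b} ∧
      ∀ u u' u'' : ℝ → ℂ,
        (∀ x ∈ Set.Icc (-b) b, HasDerivAt u (u' x) x) →
        (∀ x ∈ Set.Icc (-b) b, HasDerivAt u' (u'' x) x) →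
        ContinuousOn u'' (Set.Icc (-b) b) →
        ∃ D1 D2 : ℝ → ℂ,
          (∀ x ∈ Set.Icc (-b) b,
            HasDerivAt (fun s : ℝ => u s + ∫ t in (-s)..s, K s t * u t) (D1 x) x) ∧
          (∀ x ∈ Set.Icc (-b) b, HasDerivAt D1 (D2 x) x) ∧
          ContinuousOn D2 (Set.Icc (-b) b) ∧
          ∀ x ∈ Set.Icc (-b) b,
            D2 x - q x * (u x + ∫ t in (-x)..x, K x t * u t)
              = u'' x + ∫ t in (-x)..x, K x t * u'' t := by
  let c : ℝ → ℝ := fun x => max (-b) (min b x)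
  have hc : Continuous c := by fun_prop
  have hcm : ∀ x, c x ∈ Set.Icc (-b) b := fun x =>
    ⟨le_max_left _ _, max_le (by linarith) (min_le_left _ _)⟩
  have hci : ∀ x ∈ Set.Icc (-b) b, c x = x := fun x hx => by
    simp only [c]
    rw [min_eq_right hx.2, max_eq_right hx.1]
  let Q : ℝ → ℂ := fun x => q (c x)
  have cQ : Continuous Q := hq.comp_continuous hc hcm
  have eQ : ∀ x ∈ Set.Icc (-b) b, Q x = q x := fun x hx => by simp only [Q, hci x hx]
  obtain ⟨M, hM⟩ := isCompact_Icc.exists_bound_of_continuousOn hq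
  have hM0 : 0 ≤ M := (norm_nonneg _).trans (hM _ (hcm 0))
  obtain ⟨H, cH, hH⟩ := tm_exists_H Q cQ M hM0 (fun x => hM _ (hcm x))
  let K0 : ℝ → ℝ → ℂ := fun s t => H ((s + t) / 2, (s - t) / 2)
  have cK0 : ∀ s, Continuous (K0 s) := fun s => by fun_prop
  refine ⟨tmK b K0, ?_, ?_⟩
  · have : Continuous fun p : ℝ × ℝ => K0 p.1 p.2 := by fun_prop
    exact this.continuousOn.congr fun p hp => tmK_in b K0 p.1 (abs_le.1 hp.2) p.2
  intro u u' u'' hu hu' hu''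
  obtain ⟨v, v', v'', dv, dv', cv'', hv⟩ := tm_extend b hb u u' u'' hu hu' hu''
  have cv : Continuous v := continuous_iff_continuousAt.2 fun x => (dv x).continuousAt
  have e0 : ∀ x ∈ Set.Icc (-b) b, v x = u x := fun x hx => (hv x hx).1
  have e1 : ∀ x ∈ Set.Icc (-b) b, v' x = u' x := fun x hx => (hv x hx).2.1
  have e2 : ∀ x ∈ Set.Icc (-b) b, v'' x = u'' x := fun x hx => (hv x hx).2.2
  obtain ⟨F1, hF0, hF1⟩ := tm_global Q cQ H cH hH v v' v'' dv dv' cv''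
  let F0 : ℝ → ℂ := fun s => ∫ t in (-s)..s, K0 s t * v t
  let G0 : ℝ → ℂ := fun s => ∫ t in (-s)..s, K0 s t * v'' t
  have cF0 : Continuous F0 := continuous_iff_continuousAt.2 fun x => (hF0 x).continuousAt
  have cG0 : Continuous G0 := by
    have e : G0 = fun x => 2 * ∫ s in (0:ℝ)..x, K0 x (2 * s - x) * v'' (2 * s - x) := by
      funext x
      exact tm_cov (fun t => K0 x t * v'' t) x
    rw [e]
    refine continuous_const.mul ?_
    refine intervalIntegral.continuous_parametric_intervalIntegral_of_continuous
      (f := fun x s => K0 x (2 * s - x) * v'' (2 * s - x)) ?_ continuous_id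
    unfold Function.uncurry
    fun_prop
  refine ⟨fun x => v' x + F1 x, fun x => v'' x + (Q x * v x + Q x * F0 x + G0 x), ?_, ?_, ?_, ?_⟩
  · intro x hx
    have h1 : HasDerivAt u (v' x) x := by rw [e1 x hx]; exact hu x hx
    refine h1.add ?_
    refine tm_glue b hb _ F0 F1 hF0 (fun s hs => tm_int_in b K0 u v e0 s hs)
      (fun s hs hs2 => tm_int_right b hb K0 cK0 u v cv e0 s hs hs2)
      (fun s hs hs2 => ?_) x hx
    rw [tm_int_left b hb K0 cK0 u v cv e0 s hs hs2]
    simp only [F0, neg_neg]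
  · intro x _
    exact (dv' x).add (hF1 x)
  · exact Continuous.continuousOn (by fun_prop)
  · intro x hx
    rw [tm_int_in b K0 u v e0 x hx, tm_int_in b K0 u'' v'' e2 x hx]
    simp only [eQ x hx, e0 x hx, e2 x hx, F0, G0]
    ring

end
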